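/- For every i ∈ {1, …, |N(σ)|}: E[λ_i] ≤ α·E[C(π*)]·ε_i/(Q − f(ρ_i)). -/

import Mathlib

/-!
Common framework for the Stochastic Submodular Cover problem
(Hellerstein–Kletenik–Parthasarathy, "A Tight Bound for Stochastic Submodular Cover").
-/

namespace SSC

open Finset
open scoped Classical

noncomputable section

variable {E O : Type*}

/-- A subrealization assigns to each item either a state or `none` (unassigned).
A realization corresponds to the case where every item is assigned. -/
abbrev Sub (E O : Type*) := E → Option O

/-- `subext ψ ψ'` means `ψ ⊆ ψ'` as partial assignments of states to items. -/
def subext (ψ ψ' : Sub E O) : Prop := ∀ e o, ψ e = some o → ψ' e = some o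

/-- `ssubext ψ ψ'` means `ψ ⊂ ψ'` (strict extension). -/
def ssubext (ψ ψ' : Sub E O) : Prop := subext ψ ψ' ∧ ψ ≠ ψ'

/-- Extend a subrealization `ψ` by assigning state `o` to item `e`. -/
def updateSub [DecidableEq E] (ψ : Sub E O) (e : E) (o : O) : Sub E O :=
  fun e' => if e' = e then some o else ψ e'

/-- View a (full) realization as a subrealization. -/
def toSub (φ : E → O) : Sub E O := fun e => some (φ e)

variable [Fintype E] [DecidableEq E] [Fintype O] [DecidableEq O]

/-- An instance of the Stochastic Submodular Cover problem: positive item costs `c`,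
a probability mass function `p` on realizations with mutually independent item states,
and a utility function `f` on subrealizations which is zero on the empty subrealization,
nonnegative, monotone and submodular (pointwise polymatroid), and equal to the goal
value `Q > 0` on every full realization (coverability). -/
structure Problem (E O : Type*) [Fintype E] [DecidableEq E] [Fintype O] [DecidableEq O] where
  c : E → ℝ
  c_pos : ∀ e, 0 < c e
  p : (E → O) → ℝ
  p_nonneg : ∀ φ, 0 ≤ p φ
  p_sum : ∑ φ : E → O, p φ = 1
  indep : ∀ φ : E → O, p φ = ∏ e : E, ∑ φ' : E → O, if φ' e = φ e then p φ' else 0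
  f : Sub E O → ℝ
  f_nonneg : ∀ ψ, 0 ≤ f ψ
  f_empty : f (fun _ => none) = 0
  f_mono : ∀ ψ ψ' : Sub E O, subext ψ ψ' → f ψ ≤ f ψ'
  f_submod : ∀ (ψ ψ' : Sub E O) (e : E) (o : O), subext ψ ψ' → ψ' e = none →
      f (updateSub ψ' e o) - f ψ' ≤ f (updateSub ψ e o) - f ψ
  Q : ℝ
  Q_pos : 0 < Q
  f_cover : ∀ φ : E → O, f (toSub φ) = Q

variable (M : Problem E O)

/-- Expectation of a random variable `X` with respect to the random realization `Φ`. -/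
def Ex (X : (E → O) → ℝ) : ℝ := ∑ φ : E → O, M.p φ * X φ

/-- Probability of an event `A` of the random realization `Φ`. -/
def Pr (A : (E → O) → Prop) : ℝ := ∑ φ : E → O, if A φ then M.p φ else 0

/-- Conditional expectation `E[X | A]`. -/
def cEx (X : (E → O) → ℝ) (A : (E → O) → Prop) : ℝ :=
  (∑ φ : E → O, if A φ then M.p φ * X φ else 0) / Pr M A

/-- The random marginal increase in utility `F_ψ(e)` from observing the state of `e`. -/
def Fm (ψ : Sub E O) (e : E) (φ : E → O) : ℝ := M.f (updateSub ψ e (φ e)) - M.f ψ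

/-- The unit price `υ(e|ψ) = c(e) / E[F_ψ(e)]`. -/
def price (ψ : Sub E O) (e : E) : ℝ := M.c e / Ex M (Fm M ψ e)

/-- An adaptive covering policy: at every subrealization `ψ` with `f ψ < Q` it selects an
item outside `dom ψ`. -/
def IsPolicy (π : Sub E O → E) : Prop := ∀ ψ : Sub E O, M.f ψ < M.Q → ψ (π ψ) = none

/-- The `α`-approximate adaptive greedy policy: at every `ψ` with `f ψ < Q` the unit price of
the selected item `σ ψ` is at most `α` times the minimum unit price, i.e.
`υ(σ ψ | ψ) ≤ α · υ(e | ψ)` for every `e ∉ dom ψ`, written multiplicatively so that infinite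
unit prices (zero expected marginal utility) are handled correctly. -/
def IsGreedy (α : ℝ) (σ : Sub E O → E) : Prop :=
  IsPolicy M σ ∧
    ∀ ψ : Sub E O, M.f ψ < M.Q → ∀ e : E, ψ e = none →
      M.c (σ ψ) * Ex M (Fm M ψ e) ≤ α * M.c e * Ex M (Fm M ψ (σ ψ))

/-- One step of executing policy `π` on realization `φ`. -/
def stepPol (π : Sub E O → E) (φ : E → O) (ψ : Sub E O) : Sub E O :=
  if M.f ψ < M.Q then updateSub ψ (π ψ) (φ (π ψ)) else ψ

/-- The subrealization reached after `n` steps of executing `π` on `φ`. -/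
def execAux (π : Sub E O → E) (φ : E → O) : ℕ → Sub E O
  | 0 => fun _ => none
  | n + 1 => stepPol M π φ (execAux π φ n)

/-- The cover `Ψ(π)` constructed by executing `π` on realization `φ`. -/
def cover (π : Sub E O → E) (φ : E → O) : Sub E O := execAux M π φ (Fintype.card E)

/-- `ψ` is visited when executing `π` on realization `φ`. -/
def visits (π : Sub E O → E) (φ : E → O) (ψ : Sub E O) : Prop := ∃ n, execAux M π φ n = ψ

/-- The set `S(π)` of items selected when executing `π` on `φ`. -/
def Ssel (π : Sub E O → E) (φ : E → O) : Finset E :=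
  Finset.univ.filter fun e => cover M π φ e ≠ none

/-- The cost `C(π)` incurred when executing `π` on `φ`. -/
def C (π : Sub E O → E) (φ : E → O) : ℝ := ∑ e ∈ Ssel M π φ, M.c e

/-- An adaptive covering policy of minimum expected cost. -/
def IsOptimal (π : Sub E O → E) : Prop :=
  IsPolicy M π ∧ ∀ π' : Sub E O → E, IsPolicy M π' → Ex M (C M π) ≤ Ex M (C M π')

/-- `N(π)`: the non-leaf nodes of the decision tree of `π` — subrealizations with
`f ψ < Q` that are visited with positive probability. -/
def Nnodes (π : Sub E O → E) : Finset (Sub E O) :=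
  Finset.univ.filter fun ψ => M.f ψ < M.Q ∧ 0 < Pr M fun φ => visits M π φ ψ

/-- The event `ψ ↝ i`, for a marker located at utility value `b = f(ρ_i)`:
`ψ` is the last subrealization visited by `σ` (on the given realization) whose
utility is at most `b`. -/
def leadsTo (σ : Sub E O → E) (b : ℝ) (ψ : Sub E O) (φ : E → O) : Prop :=
  visits M σ φ ψ ∧ M.f ψ ≤ b ∧
    ∀ ψ' : Sub E O, visits M σ φ ψ' → M.f ψ' ≤ b → subext ψ' ψ

/-- The revenue `λ_i = υ_ψ · ε_i` collected by `σ` from the marker located at utility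
value `b = f(ρ_i)` with interval length `εi`, where `ψ` is the unique subrealization
with `ψ ↝ i`. -/
def lam (σ : Sub E O → E) (b εi : ℝ) (φ : E → O) : ℝ :=
  ∑ ψ : Sub E O, if leadsTo M σ b ψ φ then price M ψ (σ ψ) * εi else 0

/-- The revenue `μ(e)` collected by the optimal policy `πs` from item `e`
(relative to the greedy policy `σ`, both executed on the same realization). -/
def mu (σ πs : Sub E O → E) (e : E) (φ : E → O) : ℝ :=
  if e ∈ Ssel M πs φ then
    if e ∈ Ssel M σ φ then
      ∑ ψ : Sub E O,
        if visits M σ φ ψ ∧ M.f ψ < M.Q ∧ σ ψ = e then price M ψ e * Fm M ψ e φ else 0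
    else M.c e
  else 0

/-- The total revenue `μ*` collected by the optimal policy. -/
def muStar (σ πs : Sub E O → E) (φ : E → O) : ℝ := ∑ e : E, mu M σ πs e φ

/-- Replay of the internal state of policy `πs` in the second stage of the hybrid policy:
starting from the empty subrealization, repeatedly query `πs`; an item whose state is
already recorded in `ψ'` is not re-selected, its recorded state being used instead. -/
def replayAux (πs : Sub E O → E) (ψ' : Sub E O) : ℕ → Sub E O
  | 0 => fun _ => none
  | n + 1 =>
    if M.f (replayAux πs ψ' n) < M.Q then
      match ψ' (πs (replayAux πs ψ' n)) with
      | some o => updateSub (replayAux πs ψ' n) (πs (replayAux πs ψ' n)) o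
      | none => replayAux πs ψ' n
    else replayAux πs ψ' n

/-- The hybrid policy `π^ψ0`: follow `σ` until `ψ0` is visited, then switch to executing
`πs` from the root of its tree, never re-selecting an item of `dom ψ0` and using the
state recorded in `ψ0` instead. -/
def hybrid (σ πs : Sub E O → E) (ψ0 : Sub E O) : Sub E O → E := fun ψ' =>
  if subext ψ0 ψ' then πs (replayAux M πs ψ' (Fintype.card E)) else σ ψ'

/-- `δ⁺_ψ0(e)`: the marginal utility obtained by the hybrid policy `π^ψ0` when it selects
`e` during its second stage, and `0` if `e` is not selected in the second stage. -/
def deltaPlus (σ πs : Sub E O → E) (ψ0 : Sub E O) (e : E) (φ : E → O) : ℝ :=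
  ∑ ψ' : Sub E O,
    if subext ψ0 ψ' ∧ visits M (hybrid M σ πs ψ0) φ ψ' ∧
        ssubext ψ' (cover M (hybrid M σ πs ψ0) φ) ∧ hybrid M σ πs ψ0 ψ' = e
    then Fm M ψ' e φ else 0


/-- Marginal probability of state `o` for item `e`. -/
def qm (M : Problem E O) (e : E) (o : O) : ℝ := ∑ φ' : E → O, if φ' e = o then M.p φ' else 0

theorem qm_sum (M : Problem E O) (e : E) : ∑ o, qm M e o = 1 := by
  unfold qm
  rw [Finset.sum_comm]
  simp [M.p_sum]

theorem Ex_coord (M : Problem E O) (e : E) (h : O → ℝ) :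
    Ex M (fun φ => h (φ e)) = ∑ o, qm M e o * h o := by
  unfold qm Ex
  simp_rw [Finset.sum_mul]
  rw [Finset.sum_comm]
  simp [ite_mul]

theorem p_swap (M : Problem E O) (e : E) (φ : E → O) (o : O) :
    M.p φ * qm M e o = M.p (Function.update φ e o) * qm M e (φ e) := by
  have hp : ∀ φ : E → O, M.p φ = qm M e (φ e) * ∏ x ∈ Finset.univ.erase e, qm M x (φ x) := by
    intro φ
    rw [Finset.mul_prod_erase Finset.univ (fun x => qm M x (φ x)) (Finset.mem_univ e)]
    exact M.indep φ
  rw [hp φ, hp (Function.update φ e o)]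
  have : ∏ x ∈ Finset.univ.erase e, qm M x (Function.update φ e o x)
      = ∏ x ∈ Finset.univ.erase e, qm M x (φ x) := by
    apply Finset.prod_congr rfl
    intro x hx
    rw [Function.update_of_ne (Finset.ne_of_mem_erase hx)]
  rw [this, Function.update_self]
  ring

theorem Ex_indep (M : Problem E O) (e : E) (g : (E → O) → ℝ) (h : O → ℝ)
    (hg : ∀ φ o, g (Function.update φ e o) = g φ) :
    Ex M (fun φ => g φ * h (φ e)) = Ex M g * Ex M (fun φ => h (φ e)) := by
  rw [Ex_coord]
  unfold Ex
  rw [Finset.sum_mul_sum]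
  have h1 : ∑ φ : E → O, M.p φ * (g φ * h (φ e))
      = ∑ x : (E → O) × O, M.p x.1 * qm M e x.2 * (g x.1 * h (x.1 e)) := by
    rw [Fintype.sum_prod_type]
    apply Finset.sum_congr rfl
    intro φ _
    have := qm_sum M e
    calc _ = (∑ o, qm M e o) * (M.p φ * (g φ * h (φ e))) := by rw [this, one_mul]
      _ = _ := by
        rw [Finset.sum_mul]
        apply Finset.sum_congr rfl
        intros; ring
  rw [h1, ← Fintype.sum_prod_type'
    (f := fun φ o => M.p φ * g φ * (qm M e o * h o))]
  have hinv : Function.Involutive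
      (fun x : (E → O) × O => ((Function.update x.1 e x.2, x.1 e) : (E → O) × O)) := by
    rintro ⟨φ, o⟩
    simp
  apply Fintype.sum_equiv hinv.toPerm
  rintro ⟨φ, o⟩
  have := p_swap M e φ o
  simp only [Function.Involutive.coe_toPerm]
  rw [hg]
  rw [this]
  ring

theorem subext_refl (ψ : Sub E O) : subext ψ ψ := fun _ _ h => h

theorem subext_trans {a b c : Sub E O} (h : subext a b) (h' : subext b c) : subext a c :=
  fun e o x => h' e o (h e o x)

theorem subext_antisymm {a b : Sub E O} (h : subext a b) (h' : subext b a) : a = b := by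
  funext e
  cases ha : a e with
  | none =>
    cases hb : b e with
    | none => rfl
    | some o => rw [h' e o hb] at ha; cases ha
  | some o => rw [h e o ha]

theorem subext_none {a b : Sub E O} (h : subext a b) {e : E} (hb : b e = none) : a e = none := by
  cases ha : a e with
  | none => rfl
  | some o => rw [h e o ha] at hb; cases hb

theorem subext_update {ψ : Sub E O} {e : E} (h : ψ e = none) (o : O) :
    subext ψ (updateSub ψ e o) := by
  intro x o' hx
  unfold updateSub
  split_ifs with hxe
  · subst hxe; rw [h] at hx; cases hx
  · exact hx

theorem step_mono (M : Problem E O) {π : Sub E O → E} (hπ : IsPolicy M π) (φ : E → O)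
    (ψ : Sub E O) : subext ψ (stepPol M π φ ψ) := by
  unfold stepPol
  split_ifs with h
  · exact subext_update (hπ ψ h) _
  · exact subext_refl _

theorem exec_mono (M : Problem E O) {π : Sub E O → E} (hπ : IsPolicy M π) (φ : E → O)
    {m n : ℕ} (h : m ≤ n) : subext (execAux M π φ m) (execAux M π φ n) := by
  induction h with
  | refl => exact subext_refl _
  | step _ ih => exact subext_trans ih (step_mono M hπ φ _)

theorem exec_sub (M : Problem E O) (π : Sub E O → E) (φ : E → O) (n : ℕ) :
    subext (execAux M π φ n) (toSub φ) := by
  induction n with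
  | zero => intro e o h; cases h
  | succ n ih =>
    show subext (stepPol M π φ (execAux M π φ n)) _
    unfold stepPol
    split_ifs with h
    · intro e o he
      unfold updateSub at he
      split_ifs at he with hh
      · subst hh; exact he
      · exact ih e o he
    · exact ih

theorem exec_card (M : Problem E O) {π : Sub E O → E} (hπ : IsPolicy M π) (φ : E → O) (n : ℕ) :
    M.Q ≤ M.f (execAux M π φ n) ∨
      n ≤ (Finset.univ.filter fun e => execAux M π φ n e ≠ none).card := by
  induction n with
  | zero => right; simp
  | succ n ih =>
    by_cases hlt : M.f (execAux M π φ n) < M.Q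
    · right
      have h2 := ih.resolve_left (not_le.mpr hlt)
      refine Nat.succ_le_of_lt (lt_of_le_of_lt h2 (Finset.card_lt_card ?_))
      have hno := hπ _ hlt
      rw [Finset.ssubset_iff_of_subset]
      · refine ⟨π (execAux M π φ n), ?_, ?_⟩
        · simp [execAux, stepPol, hlt, updateSub]
        · simp [hno]
      · intro e he
        simp only [Finset.mem_filter, Finset.mem_univ, true_and] at he ⊢
        intro h0
        exact he (subext_none (exec_mono M hπ φ (Nat.le_succ n)) h0)
    · left
      exact (not_lt.mp hlt).trans (M.f_mono _ _ (exec_mono M hπ φ (Nat.le_succ n)))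

theorem cover_ge (M : Problem E O) {π : Sub E O → E} (hπ : IsPolicy M π) (φ : E → O) :
    M.Q ≤ M.f (cover M π φ) := by
  rcases exec_card M hπ φ (Fintype.card E) with h | h
  · exact h
  · have h1 : (Finset.univ.filter fun e => execAux M π φ (Fintype.card E) e ≠ none)
        = Finset.univ := by
      apply Finset.eq_univ_of_card
      exact le_antisymm (Finset.card_le_univ _) h
    have h2 : cover M π φ = toSub φ := by
      apply subext_antisymm (exec_sub M π φ _)
      intro e o he
      have h3 : e ∈ (Finset.univ.filter fun e => execAux M π φ (Fintype.card E) e ≠ none) := by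
        rw [h1]; exact Finset.mem_univ e
      simp only [Finset.mem_filter, Finset.mem_univ, true_and] at h3
      obtain ⟨o', ho'⟩ := Option.ne_none_iff_exists'.mp h3
      have h4 := exec_sub M π φ _ e o' ho'
      rw [he] at h4
      exact ho'.trans h4.symm
    rw [h2, M.f_cover]

theorem exec_update (M : Problem E O) {π : Sub E O → E} (hπ : IsPolicy M π) (φ : E → O)
    (e : E) (o : O) (n : ℕ) (h : execAux M π φ n e = none) :
    execAux M π (Function.update φ e o) n = execAux M π φ n := by
  induction n with
  | zero => rfl
  | succ n ih =>
    have h0 := subext_none (exec_mono M hπ φ (Nat.le_succ n)) h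
    have ih := ih h0
    show stepPol M π _ (execAux M π _ n) = stepPol M π φ (execAux M π φ n)
    rw [ih]
    unfold stepPol
    split_ifs with hlt
    · have hne : π (execAux M π φ n) ≠ e := by
        rintro rfl
        simp [execAux, stepPol, hlt, updateSub] at h
      rw [Function.update_of_ne hne]
    · rfl

/-- An event invariant under resampling in one direction is invariant. -/
theorem update_iff {P : (E → O) → Prop} (e : E)
    (h : ∀ φ o, P φ → P (Function.update φ e o)) (φ : E → O) (o : O) :
    P (Function.update φ e o) ↔ P φ := by
  refine ⟨fun hp => ?_, h φ o⟩
  have := h _ (φ e) hp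
  simpa using this

theorem Ssel_update (M : Problem E O) {π : Sub E O → E} (hπ : IsPolicy M π) (e : E)
    (φ : E → O) (o : O) : e ∈ Ssel M π (Function.update φ e o) ↔ e ∈ Ssel M π φ := by
  have key := update_iff (O := O) (P := fun φ => ¬ e ∈ Ssel M π φ) e (by
    intro φ o h
    simp only [Ssel, Finset.mem_filter, Finset.mem_univ, true_and, not_not, ne_eq] at h ⊢
    unfold cover at *
    rw [exec_update M hπ φ e o _ h, h]) φ o
  exact not_iff_not.mp key

theorem visits_update (M : Problem E O) {π : Sub E O → E} (hπ : IsPolicy M π) (e : E)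
    (ψ : Sub E O) (hψ : ψ e = none)
    (φ : E → O) (o : O) (h : visits M π φ ψ) : visits M π (Function.update φ e o) ψ := by
  obtain ⟨n, rfl⟩ := h
  exact ⟨n, exec_update M hπ φ e o n hψ⟩

theorem leadsTo_iff (M : Problem E O) {σ : Sub E O → E} (hσ : IsPolicy M σ) {b : ℝ}
    (hb : b < M.Q) (ψ : Sub E O) (φ : E → O) :
    leadsTo M σ b ψ φ ↔ visits M σ φ ψ ∧ M.f ψ ≤ b ∧ b < M.f (stepPol M σ φ ψ) := by
  unfold leadsTo
  refine and_congr_right fun hv => and_congr_right fun hf => ?_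
  obtain ⟨n, rfl⟩ := hv
  have hlt := lt_of_le_of_lt hf hb
  constructor
  · intro h
    by_contra hcon
    have h1 := h _ ⟨n + 1, rfl⟩ (not_lt.mp hcon)
    have h2 := subext_none h1 (hσ _ hlt)
    simp [execAux, stepPol, hlt, updateSub] at h2
  · rintro h _ ⟨m, rfl⟩ hm
    rcases Nat.lt_or_ge n m with hnm | hnm
    · have : M.f (execAux M σ φ (n+1)) ≤ _ := M.f_mono _ _ (exec_mono M hσ φ hnm)
      change M.f (stepPol M σ φ (execAux M σ φ n)) ≤ _ at this
      linarith
    · exact exec_mono M hσ φ hnm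

/-- The node at which item `e` is charged. -/
def PP (M : Problem E O) (σ : Sub E O → E) (b : ℝ) (e : E) (ψ : Sub E O) (φ : E → O) : Prop :=
  visits M σ φ ψ ∧ M.f ψ ≤ b ∧ ψ e = none ∧ (σ ψ = e ∨ leadsTo M σ b ψ φ)

theorem PP_update (M : Problem E O) {σ : Sub E O → E} (hσ : IsPolicy M σ) {b : ℝ}
    (hb : b < M.Q) (e : E) (ψ : Sub E O) (φ : E → O) (o : O) :
    PP M σ b e ψ (Function.update φ e o) ↔ PP M σ b e ψ φ := by
  apply update_iff (P := PP M σ b e ψ)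
  rintro φ o ⟨hv, hf, hn, h⟩
  have hv' := visits_update M hσ e ψ hn φ o hv
  refine ⟨hv', hf, hn, ?_⟩
  by_cases he : σ ψ = e
  · exact Or.inl he
  · right
    have h1 := h.resolve_left he
    rw [leadsTo_iff M hσ hb] at h1 ⊢
    refine ⟨hv', hf, ?_⟩
    have : stepPol M σ (Function.update φ e o) ψ = stepPol M σ φ ψ := by
      unfold stepPol
      rw [Function.update_of_ne he]
    rw [this]
    exact h1.2.2

theorem PP_aux (M : Problem E O) {σ : Sub E O → E} (hσ : IsPolicy M σ) {b : ℝ}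
    (hb : b < M.Q) (e : E) (φ : E → O) {m n : ℕ} (hmn : m < n)
    (h1 : PP M σ b e (execAux M σ φ m) φ) (h2 : PP M σ b e (execAux M σ φ n) φ) :
    execAux M σ φ m = execAux M σ φ n := by
  obtain ⟨_, hf, hn, h⟩ := h1
  rcases h with h | h
  · exfalso
    have h3 := subext_none (exec_mono M hσ φ (Nat.succ_le_of_lt hmn)) h2.2.2.1
    have hlt := lt_of_le_of_lt hf hb
    simp [execAux, stepPol, hlt, updateSub, h] at h3
  · exact subext_antisymm (exec_mono M hσ φ hmn.le) (h.2.2 _ h2.1 h2.2.1)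

theorem PP_unique (M : Problem E O) {σ : Sub E O → E} (hσ : IsPolicy M σ) {b : ℝ}
    (hb : b < M.Q) (e : E) (φ : E → O) {ψ ψ' : Sub E O}
    (h1 : PP M σ b e ψ φ) (h2 : PP M σ b e ψ' φ) : ψ = ψ' := by
  obtain ⟨m, rfl⟩ := h1.1
  obtain ⟨n, rfl⟩ := h2.1
  rcases lt_trichotomy m n with h | h | h
  · exact PP_aux M hσ hb e φ h h1 h2
  · rw [h]
  · exact (PP_aux M hσ hb e φ h h2 h1).symm

theorem PP_sum_le (M : Problem E O) {σ : Sub E O → E} (hσ : IsPolicy M σ) {b : ℝ}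
    (hb : b < M.Q) (e : E) (φ : E → O) :
    ∑ ψ : Sub E O, (if PP M σ b e ψ φ then (1 : ℝ) else 0) ≤ 1 := by
  rw [Finset.sum_boole]
  have : (Finset.univ.filter fun ψ => PP M σ b e ψ φ).card ≤ 1 := by
    rw [Finset.card_le_one]
    intro a ha a' ha'
    simp only [Finset.mem_filter, Finset.mem_univ, true_and] at ha ha'
    exact PP_unique M hσ hb e φ ha ha'
  exact_mod_cast this

/-- Extension of `ψ` by the states in `φ` of the items of `A`. -/
def extSub (ψ : Sub E O) (A : Finset E) (φ : E → O) : Sub E O :=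
  fun e => if e ∈ A then some (φ e) else ψ e

theorem ext_bound (M : Problem E O) (ψ : Sub E O) (φ : E → O) (A : Finset E)
    (hA : ∀ e ∈ A, ψ e = none) :
    M.f (extSub ψ A φ) - M.f ψ ≤ ∑ e ∈ A, Fm M ψ e φ := by
  induction A using Finset.induction_on with
  | empty =>
    have h0 : extSub ψ ∅ φ = ψ := by
      funext x
      simp [extSub]
    rw [h0]
    simp
  | insert a s ha ih =>
    have ih := ih (fun e he => hA e (Finset.mem_insert_of_mem he))
    rw [Finset.sum_insert ha]
    have h1 : extSub ψ (insert a s) φ = updateSub (extSub ψ s φ) a (φ a) := by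
      funext x
      unfold extSub updateSub
      by_cases hx : x = a
      · subst hx; simp
      · simp [hx]
    have h2 := M.f_submod ψ (extSub ψ s φ) a (φ a) (by
      intro x o hx
      unfold extSub
      split_ifs with hs
      · rw [hA x (Finset.mem_insert_of_mem hs)] at hx; cases hx
      · exact hx) (by
      unfold extSub
      rw [if_neg ha]
      exact hA a (Finset.mem_insert_self _ _))
    rw [h1]
    unfold Fm at *
    linarith

theorem cover_bound (M : Problem E O) {π : Sub E O → E} (hπ : IsPolicy M π) (ψ : Sub E O)
    (φ : E → O) (hψ : subext ψ (toSub φ)) :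
    M.Q - M.f ψ ≤ ∑ e : E, if e ∈ Ssel M π φ ∧ ψ e = none then Fm M ψ e φ else 0 := by
  rw [← Finset.sum_filter]
  refine le_trans ?_ (ext_bound M ψ φ _ (fun e he => (Finset.mem_filter.mp he).2.2))
  have h1 := cover_ge M hπ φ
  have h2 := M.f_mono (cover M π φ) (extSub ψ
    (Finset.univ.filter fun e => e ∈ Ssel M π φ ∧ ψ e = none) φ) (by
    intro e o he
    have h3 := exec_sub M π φ _ e o he
    unfold extSub
    split_ifs with hm
    · exact h3
    · have hS : e ∈ Ssel M π φ := by
        simp [Ssel, he]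
      have : ψ e ≠ none := by
        intro h0
        exact hm (by simp [hS, h0])
      obtain ⟨o', ho'⟩ := Option.ne_none_iff_exists'.mp this
      rw [ho', ← h3, hψ e o' ho'])
  linarith

theorem Fm_nonneg (M : Problem E O) (ψ : Sub E O) (e : E) (h : ψ e = none) (φ : E → O) :
    0 ≤ Fm M ψ e φ := by
  unfold Fm
  have := M.f_mono _ _ (subext_update h (φ e))
  linarith

theorem ExFm_nonneg (M : Problem E O) (ψ : Sub E O) (e : E) (h : ψ e = none) :
    0 ≤ Ex M (Fm M ψ e) :=
  Finset.sum_nonneg fun φ _ => mul_nonneg (M.p_nonneg φ) (Fm_nonneg M ψ e h φ)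

theorem price_nonneg (M : Problem E O) (ψ : Sub E O) (e : E) (h : ψ e = none) :
    0 ≤ price M ψ e := div_nonneg (M.c_pos e).le (ExFm_nonneg M ψ e h)

theorem price_bound (M : Problem E O) {α : ℝ} (hα : 1 ≤ α) {σ : Sub E O → E}
    (hσ : IsGreedy M α σ) (ψ : Sub E O) (hψ : M.f ψ < M.Q) (e : E) (he : ψ e = none) :
    price M ψ (σ ψ) * Ex M (Fm M ψ e) ≤ α * M.c e := by
  have h := hσ.2 ψ hψ e he
  have h0 := ExFm_nonneg M ψ (σ ψ) (hσ.1 ψ hψ)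
  unfold price
  rcases h0.eq_or_lt with h0 | h0
  · rw [← h0]
    have := M.c_pos e
    simp only [div_zero, zero_mul]
    positivity
  · rw [div_mul_eq_mul_div, div_le_iff₀ h0]
    exact h

/-- The core bound for one pair of an item and a node. -/
theorem pair_bound (M : Problem E O) {α : ℝ} (hα : 1 ≤ α) {σ πs : Sub E O → E}
    (hσ : IsGreedy M α σ) (hπ : IsPolicy M πs) {b : ℝ} (hb : b < M.Q) (e : E) (ψ : Sub E O) :
    Ex M (fun φ => if e ∈ Ssel M πs φ ∧ PP M σ b e ψ φ then
        price M ψ (σ ψ) * Fm M ψ e φ else 0)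
      ≤ Ex M (fun φ => if e ∈ Ssel M πs φ ∧ PP M σ b e ψ φ then α * M.c e else 0) := by
  by_cases hc : M.f ψ ≤ b ∧ ψ e = none
  · have h1 := Ex_indep M e
      (fun φ => if e ∈ Ssel M πs φ ∧ PP M σ b e ψ φ then (1 : ℝ) else 0)
      (fun o => M.f (updateSub ψ e o) - M.f ψ) (by
        intro φ o
        simp only [Ssel_update M hπ, PP_update M hσ.1 hb])
    have h2 : Ex M (fun φ => if e ∈ Ssel M πs φ ∧ PP M σ b e ψ φ then
        price M ψ (σ ψ) * Fm M ψ e φ else 0) =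
        price M ψ (σ ψ) * Ex M (fun φ =>
          (if e ∈ Ssel M πs φ ∧ PP M σ b e ψ φ then (1 : ℝ) else 0)
            * (M.f (updateSub ψ e (φ e)) - M.f ψ)) := by
      unfold Ex
      rw [Finset.mul_sum]
      apply Finset.sum_congr rfl
      intro φ _
      unfold Fm
      beta_reduce
      split_ifs <;> ring
    have h3 : Ex M (fun φ => if e ∈ Ssel M πs φ ∧ PP M σ b e ψ φ then α * M.c e else 0)
        = α * M.c e * Ex M (fun φ =>
          (if e ∈ Ssel M πs φ ∧ PP M σ b e ψ φ then (1 : ℝ) else 0)) := by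
      unfold Ex
      rw [Finset.mul_sum]
      apply Finset.sum_congr rfl
      intro φ _
      beta_reduce
      split_ifs <;> ring
    rw [h2, h1, h3]
    have h4 := price_bound M hα hσ ψ (lt_of_le_of_lt hc.1 hb) e hc.2
    have h5 : 0 ≤ Ex M (fun φ =>
          (if e ∈ Ssel M πs φ ∧ PP M σ b e ψ φ then (1 : ℝ) else 0)) :=
      Finset.sum_nonneg fun φ _ => mul_nonneg (M.p_nonneg φ) (by beta_reduce; split_ifs <;> norm_num)
    have h6 := mul_le_mul_of_nonneg_right h4 h5
    change _ * (_ * Ex M (Fm M ψ e)) ≤ _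
    linarith
  · have hP : ∀ φ, ¬ PP M σ b e ψ φ := fun φ h => hc ⟨h.2.1, h.2.2.1⟩
    simp [hP]

theorem Ex_sum {ι : Type*} (M : Problem E O) (s : Finset ι) (X : ι → (E → O) → ℝ) :
    Ex M (fun φ => ∑ j ∈ s, X j φ) = ∑ j ∈ s, Ex M (X j) := by
  unfold Ex
  simp_rw [Finset.mul_sum]
  rw [Finset.sum_comm]

theorem Ex_mono (M : Problem E O) {X Y : (E → O) → ℝ} (h : ∀ φ, X φ ≤ Y φ) :
    Ex M X ≤ Ex M Y :=
  Finset.sum_le_sum fun φ _ => mul_le_mul_of_nonneg_left (h φ) (M.p_nonneg φ)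

theorem lam_core (M : Problem E O) {α : ℝ} (hα : 1 ≤ α) {σ πs : Sub E O → E}
    (hσ : IsGreedy M α σ) (hπ : IsPolicy M πs) {b : ℝ} (hb : b < M.Q) :
    Ex M (fun φ => ∑ ψ : Sub E O,
      if leadsTo M σ b ψ φ then price M ψ (σ ψ) * (M.Q - b) else 0) ≤ α * Ex M (C M πs) := by
  have hα0 : 0 ≤ α := zero_le_one.trans hα
  calc _ ≤ Ex M (fun φ => ∑ ψ : Sub E O, ∑ e : E,
        if e ∈ Ssel M πs φ ∧ PP M σ b e ψ φ then price M ψ (σ ψ) * Fm M ψ e φ else 0) := by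
        apply Ex_mono
        intro φ
        apply Finset.sum_le_sum
        intro ψ _
        have hterm : ∀ e : E, 0 ≤ if e ∈ Ssel M πs φ ∧ PP M σ b e ψ φ then
            price M ψ (σ ψ) * Fm M ψ e φ else 0 := by
          intro e
          split_ifs with h
          · exact mul_nonneg (price_nonneg M ψ _ (hσ.1 ψ (lt_of_le_of_lt h.2.2.1 hb)))
              (Fm_nonneg M ψ e h.2.2.2.1 φ)
          · exact le_rfl
        split_ifs with hl
        · have hlt := lt_of_le_of_lt hl.2.1 hb
          have hp := price_nonneg M ψ _ (hσ.1 ψ hlt)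
          have hsub : subext ψ (toSub φ) := by
            obtain ⟨n, rfl⟩ := hl.1
            exact exec_sub M σ φ n
          have h1 := cover_bound M hπ ψ φ hsub
          calc _ ≤ price M ψ (σ ψ) * ∑ e : E, (if e ∈ Ssel M πs φ ∧ ψ e = none then
                Fm M ψ e φ else 0) := by
                apply mul_le_mul_of_nonneg_left _ hp
                linarith [hl.2.1]
            _ ≤ _ := by
                rw [Finset.mul_sum]
                apply Finset.sum_le_sum
                intro e _
                by_cases hh : e ∈ Ssel M πs φ ∧ ψ e = none
                · rw [if_pos hh, if_pos ⟨hh.1, hl.1, hl.2.1, hh.2, Or.inr hl⟩]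
                · rw [if_neg hh, mul_zero]
                  exact hterm e
        · exact Finset.sum_nonneg fun e _ => hterm e
    _ = ∑ ψ : Sub E O, ∑ e : E, Ex M (fun φ =>
        if e ∈ Ssel M πs φ ∧ PP M σ b e ψ φ then price M ψ (σ ψ) * Fm M ψ e φ else 0) := by
        rw [Ex_sum]
        apply Finset.sum_congr rfl
        intro ψ _
        rw [Ex_sum]
    _ ≤ ∑ ψ : Sub E O, ∑ e : E, Ex M (fun φ =>
        if e ∈ Ssel M πs φ ∧ PP M σ b e ψ φ then α * M.c e else 0) :=
        Finset.sum_le_sum fun ψ _ => Finset.sum_le_sum fun e _ =>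
          pair_bound M hα hσ hπ hb e ψ
    _ = Ex M (fun φ => ∑ e : E, ∑ ψ : Sub E O,
        if e ∈ Ssel M πs φ ∧ PP M σ b e ψ φ then α * M.c e else 0) := by
        rw [Finset.sum_comm, Ex_sum]
        apply Finset.sum_congr rfl
        intro ψ _
        rw [Ex_sum]
    _ ≤ Ex M (fun φ => α * C M πs φ) := by
        apply Ex_mono
        intro φ
        unfold C
        rw [Finset.mul_sum, ← Finset.sum_filter_add_sum_filter_not Finset.univ
          (fun e => e ∈ Ssel M πs φ)]
        have hz : ∑ e ∈ Finset.univ.filter (fun e => ¬ e ∈ Ssel M πs φ), ∑ ψ : Sub E O,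
            (if e ∈ Ssel M πs φ ∧ PP M σ b e ψ φ then α * M.c e else 0) = 0 := by
          apply Finset.sum_eq_zero
          intro e he
          apply Finset.sum_eq_zero
          intro ψ _
          rw [if_neg]
          exact fun h => (Finset.mem_filter.mp he).2 h.1
        rw [hz, add_zero]
        have hf : Finset.univ.filter (fun e => e ∈ Ssel M πs φ) = Ssel M πs φ := by
          ext; simp
        rw [hf]
        apply Finset.sum_le_sum
        intro e he
        have h1 := PP_sum_le M hσ.1 hb e φ
        have hc : 0 ≤ α * M.c e := mul_nonneg hα0 (M.c_pos e).le
        calc _ = (α * M.c e) * ∑ ψ : Sub E O, (if PP M σ b e ψ φ then (1 : ℝ) else 0) := by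
              rw [Finset.mul_sum]
              apply Finset.sum_congr rfl
              intro ψ _
              simp [he]
          _ ≤ (α * M.c e) * 1 := mul_le_mul_of_nonneg_left h1 hc
          _ = _ := mul_one _
    _ = _ := by
        unfold Ex
        rw [Finset.mul_sum]
        apply Finset.sum_congr rfl
        intros; ring

/-- For every marker index `i`:
`E[λ_i] ≤ α·E[C(π*)]·ε_i / (Q − f(ρ_i))`. -/
theorem lam_bound
    (M : Problem E O) (α : ℝ) (hα : 1 ≤ α)
    (σ : Sub E O → E) (hσ : IsGreedy M α σ)
    (πs : Sub E O → E) (hπs : IsOptimal M πs)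
    (t : ℕ) (ρ : ℕ → Sub E O)
    (hcard : t = (Nnodes M σ).card)
    (hρmem : ∀ i, 1 ≤ i → i ≤ t → ρ i ∈ Nnodes M σ)
    (hρinj : ∀ i j, 1 ≤ i → i ≤ t → 1 ≤ j → j ≤ t → ρ i = ρ j → i = j)
    (hρmono : ∀ i j, 1 ≤ i → i ≤ j → j ≤ t → M.f (ρ i) ≤ M.f (ρ j))
    (ε : ℕ → ℝ)
    (hε : ∀ i, 1 ≤ i → i < t → ε i = M.f (ρ (i + 1)) - M.f (ρ i))
    (hεt : 1 ≤ t → ε t = M.Q - M.f (ρ t))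
    (i : ℕ) (hi1 : 1 ≤ i) (hit : i ≤ t) :
    Ex M (lam M σ (M.f (ρ i)) (ε i))
      ≤ α * Ex M (C M πs) * (ε i / (M.Q - M.f (ρ i))) := by
  have hmem := hρmem i hi1 hit
  have hb : M.f (ρ i) < M.Q := by
    simp only [Nnodes, Finset.mem_filter] at hmem
    exact hmem.2.1
  have hεnn : 0 ≤ ε i := by
    rcases hit.eq_or_lt with h | h
    · subst h
      rw [hεt hi1]
      linarith
    · rw [hε i hi1 h]
      linarith [hρmono i (i + 1) hi1 (Nat.le_succ i) h]
  have hQ : 0 < M.Q - M.f (ρ i) := by linarith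
  have hcore := lam_core M hα hσ hπs.1 hb
  have heq : Ex M (lam M σ (M.f (ρ i)) (ε i)) =
      Ex M (fun φ => ∑ ψ : Sub E O,
        if leadsTo M σ (M.f (ρ i)) ψ φ then price M ψ (σ ψ) * (M.Q - M.f (ρ i)) else 0)
        * (ε i / (M.Q - M.f (ρ i))) := by
    unfold Ex lam
    rw [Finset.sum_mul]
    apply Finset.sum_congr rfl
    intro φ _
    rw [mul_assoc, Finset.sum_mul]
    congr 1
    apply Finset.sum_congr rfl
    intro ψ _
    split_ifs
    · field_simp
    · simp
  rw [heq]
  exact mul_le_mul_of_nonneg_right hcore (div_nonneg hεnn hQ.le)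

end
end SSC
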